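/- arXiv:2603.03895 — 2 statements merged into one kernel-verified Lean document; each statement's English description precedes it below -/
import Mathlib

section
/- Let N ≥ 1, let ν_0, …, ν_{N−1} be strictly positive reals, and let S > 0. Define P_n* := S · √(ν_n) / (Σ_{m=0}^{N−1} √(ν_m)). Then P* is feasible (P_n* > 0 and Σ_n P_n* = S) and for every strictly positive P_0, …, P_{N−1} with Σ_{n=0}^{N−1} P_n = S, one has Σ_{n=0}^{N−1} ν_n / P_n ≥ Σ_{n=0}^{N−1} ν_n / P_n* = (Σ_{m=0}^{N−1} √(ν_m))² / S, with equality if and only if P_n = P_n* for all n. -/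
open Finset

/-!
Writing `ν = (√ν)²`, Sedrakyan's form of the Cauchy–Schwarz inequality bounds `Σ ν / P` below by
`(Σ √ν)² / Σ P`. The defect of this inequality is the explicit sum of squares
`Σ (√ν - c P)² / P` with `c = Σ √ν / Σ P`, which vanishes only when `P` is proportional to `√ν`;
both the optimal value and the uniqueness of the minimizer are read off from this equality case.
-/

section Sedrakyan

variable {ι K : Type*} [Field K] {s : Finset ι} {f g : ι → K}

theorem sum_sq_div_sub_sq_sum_div_sum (hg : ∀ i ∈ s, g i ≠ 0) (hsum : ∑ i ∈ s, g i ≠ 0) :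
    ∑ i ∈ s, f i ^ 2 / g i - (∑ i ∈ s, f i) ^ 2 / ∑ i ∈ s, g i =
      ∑ i ∈ s, (f i - (∑ j ∈ s, f j) / (∑ j ∈ s, g j) * g i) ^ 2 / g i := by
  set c := (∑ j ∈ s, f j) / ∑ j ∈ s, g j with hc
  have expand_term : ∀ i ∈ s,
      (f i - c * g i) ^ 2 / g i = f i ^ 2 / g i - 2 * c * f i + c ^ 2 * g i := fun i hi ↦ by
    have := hg i hi
    field_simp
    ring
  rw [sum_congr rfl expand_term, sum_add_distrib, sum_sub_distrib, ← mul_sum, ← mul_sum, hc]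
  field_simp
  ring

variable [LinearOrder K] [IsStrictOrderedRing K]

theorem sum_sq_div_eq_sq_sum_div_sum_iff (hg : ∀ i ∈ s, 0 < g i) :
    ∑ i ∈ s, f i ^ 2 / g i = (∑ i ∈ s, f i) ^ 2 / ∑ i ∈ s, g i ↔
      ∀ i ∈ s, f i * ∑ j ∈ s, g j = g i * ∑ j ∈ s, f j := by
  rcases s.eq_empty_or_nonempty with rfl | hs
  · simp
  have hsum : ∑ i ∈ s, g i ≠ 0 := (sum_pos hg hs).ne'
  rw [← sub_eq_zero, sum_sq_div_sub_sq_sum_div_sum (fun i hi ↦ (hg i hi).ne') hsum,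
    sum_eq_zero_iff_of_nonneg fun i hi ↦ div_nonneg (sq_nonneg _) (hg i hi).le]
  refine forall₂_congr fun i hi ↦ ?_
  rw [div_eq_zero_iff, or_iff_left (hg i hi).ne', sq_eq_zero_iff, sub_eq_zero, div_mul_eq_mul_div,
    eq_div_iff hsum, mul_comm (g i)]

end Sedrakyan

section PowerAllocation

variable {ι : Type*} {s : Finset ι} {ν P : ι → ℝ} {S : ℝ}

theorem sq_sum_sqrt_div_sum_le_sum_div (hν : ∀ i ∈ s, 0 ≤ ν i) (hP : ∀ i ∈ s, 0 < P i) :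
    (∑ i ∈ s, √(ν i)) ^ 2 / ∑ i ∈ s, P i ≤ ∑ i ∈ s, ν i / P i :=
  calc
    _ ≤ ∑ i ∈ s, √(ν i) ^ 2 / P i := sq_sum_div_le_sum_sq_div s _ hP
    _ = ∑ i ∈ s, ν i / P i := sum_congr rfl fun i hi ↦ by rw [Real.sq_sqrt (hν i hi)]

/-- The allocation `P*` of a total power `S` over the subcarriers in `s`, proportional to the
square roots of the inverse second moments `ν`. The normalization runs over `s` only, so the values
outside `s` carry no meaning. -/
noncomputable def rfPowerAllocation (s : Finset ι) (ν : ι → ℝ) (S : ℝ) (i : ι) : ℝ :=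
  S * √(ν i) / ∑ j ∈ s, √(ν j)

theorem sum_sqrt_pos (hs : s.Nonempty) (hν : ∀ i ∈ s, 0 < ν i) : 0 < ∑ i ∈ s, √(ν i) :=
  sum_pos (fun i hi ↦ Real.sqrt_pos.2 (hν i hi)) hs

theorem rfPowerAllocation_pos (hν : ∀ i ∈ s, 0 < ν i) (hS : 0 < S) {i : ι} (hi : i ∈ s) :
    0 < rfPowerAllocation s ν S i :=
  div_pos (mul_pos hS (Real.sqrt_pos.2 (hν i hi))) (sum_sqrt_pos ⟨i, hi⟩ hν)

theorem sum_rfPowerAllocation (hs : s.Nonempty) (hν : ∀ i ∈ s, 0 < ν i) :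
    ∑ i ∈ s, rfPowerAllocation s ν S i = S := by
  simp only [rfPowerAllocation]
  rw [← sum_div, ← mul_sum, mul_div_cancel_right₀ S (sum_sqrt_pos hs hν).ne']

theorem sum_div_eq_sq_sum_sqrt_div_sum_iff (hν : ∀ i ∈ s, 0 < ν i) (hP : ∀ i ∈ s, 0 < P i) :
    ∑ i ∈ s, ν i / P i = (∑ i ∈ s, √(ν i)) ^ 2 / ∑ i ∈ s, P i ↔
      ∀ i ∈ s, P i = rfPowerAllocation s ν (∑ j ∈ s, P j) i := by
  have sq_sqrt_div : ∀ i ∈ s, ν i / P i = √(ν i) ^ 2 / P i := fun i hi ↦ by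
    rw [Real.sq_sqrt (hν i hi).le]
  rw [sum_congr rfl sq_sqrt_div, sum_sq_div_eq_sq_sum_div_sum_iff hP]
  refine forall₂_congr fun i hi ↦ ?_
  rw [rfPowerAllocation, eq_div_iff (sum_sqrt_pos ⟨i, hi⟩ hν).ne', mul_comm √(ν i), eq_comm]

theorem sum_div_rfPowerAllocation (hs : s.Nonempty) (hν : ∀ i ∈ s, 0 < ν i) (hS : 0 < S) :
    ∑ i ∈ s, ν i / rfPowerAllocation s ν S i = (∑ i ∈ s, √(ν i)) ^ 2 / S := by
  have equality_case :=
    sum_div_eq_sq_sum_sqrt_div_sum_iff hν fun i hi ↦ rfPowerAllocation_pos hν hS hi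
  rw [sum_rfPowerAllocation hs hν] at equality_case
  exact equality_case.2 fun _ _ ↦ rfl

theorem rf_optimal_power_allocation_general (hs : s.Nonempty) (hν : ∀ i ∈ s, 0 < ν i)
    (hS : 0 < S) :
    (∀ i ∈ s, 0 < rfPowerAllocation s ν S i) ∧ ∑ i ∈ s, rfPowerAllocation s ν S i = S ∧
    ∑ i ∈ s, ν i / rfPowerAllocation s ν S i = (∑ i ∈ s, √(ν i)) ^ 2 / S ∧
    ∀ P : ι → ℝ, (∀ i ∈ s, 0 < P i) → ∑ i ∈ s, P i = S →
      ∑ i ∈ s, ν i / rfPowerAllocation s ν S i ≤ ∑ i ∈ s, ν i / P i ∧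
        (∑ i ∈ s, ν i / P i = ∑ i ∈ s, ν i / rfPowerAllocation s ν S i ↔
          ∀ i ∈ s, P i = rfPowerAllocation s ν S i) := by
  refine ⟨fun i ↦ rfPowerAllocation_pos hν hS, sum_rfPowerAllocation hs hν,
    sum_div_rfPowerAllocation hs hν hS, ?_⟩
  rintro P hP rfl
  rw [sum_div_rfPowerAllocation hs hν hS]
  exact ⟨sq_sum_sqrt_div_sum_le_sum_div (fun i hi ↦ (hν i hi).le) hP,
    sum_div_eq_sq_sum_sqrt_div_sum_iff hν hP⟩

end PowerAllocation

/-- RF-optimal power allocation: `P* n = S √(ν n) / Σ_m √(ν m)` is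
feasible and uniquely minimizes `Σ_n ν n / P n` over strictly positive allocations
summing to `S`, with optimal value `(Σ_m √(ν m))² / S`. -/
theorem rf_optimal_power_allocation
    (N : ℕ) (hN : 1 ≤ N) (ν : Fin N → ℝ) (hν : ∀ n, 0 < ν n)
    (S : ℝ) (hS : 0 < S)
    (Pstar : Fin N → ℝ)
    (hPstar : ∀ n, Pstar n = S * Real.sqrt (ν n) / ∑ m : Fin N, Real.sqrt (ν m)) :
    (∀ n, 0 < Pstar n) ∧ (∑ n : Fin N, Pstar n = S) ∧
    (∑ n : Fin N, ν n / Pstar n = (∑ m : Fin N, Real.sqrt (ν m)) ^ 2 / S) ∧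
    ∀ P : Fin N → ℝ, (∀ n, 0 < P n) → (∑ n : Fin N, P n = S) →
      (∑ n : Fin N, ν n / P n ≥ ∑ n : Fin N, ν n / Pstar n
        ∧ (∑ n : Fin N, ν n / P n = ∑ n : Fin N, ν n / Pstar n ↔
            ∀ n, P n = Pstar n)) := by
  obtain rfl : Pstar = rfPowerAllocation univ ν S := funext hPstar
  simpa using rf_optimal_power_allocation_general ⟨⟨0, hN⟩, mem_univ _⟩ (fun n _ ↦ hν n) hS
end

section
/- Let J ≥ 1 and fix reals P_1, …, P_J, R_1, …, R_J, P_ave and R_min. Consider the polytope F := { η ∈ ℝ^J : η_j ≥ 0 for all j, Σ_{j=1}^J η_j = 1, Σ_{j=1}^J η_j·P_j = P_ave, Σ_{j=1}^J η_j·R_j ≥ R_min }. Then every extreme point η* of F at which the rate constraint is inactive, i.e. Σ_{j=1}^J η_j*·R_j > R_min, has at most two nonzero coordinates. -/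
open Finset
open scoped Classical

/-!
At an extreme point of a polyhedron, no nonzero direction preserves every equality constraint and
every tight inequality: the other inequalities have slack, so one could move a little both ways
along it. Hence the dimension of the space is at most the number of equality constraints plus the
number of tight inequalities. When the sign constraints are among the inequalities, those that are
tight correspond to the zero coordinates, so the number of nonzero coordinates is at most the number
of the other constraints that hold with equality.
-/

theorem exists_pos_forall_mul_abs_le {𝕜 κ : Type*} [Field 𝕜] [LinearOrder 𝕜]
    [IsStrictOrderedRing 𝕜] [Finite κ] {a s : κ → 𝕜}
    (hs : ∀ i, 0 ≤ s i) (ha : ∀ i, s i = 0 → a i = 0) :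
    ∃ ε > 0, ∀ i, ε * |a i| ≤ s i := by
  have eventually_le (i : κ) : ∀ᶠ r : 𝕜 in Filter.atTop, |a i| ≤ r * s i := by
    rcases (hs i).eq_or_lt with hi | hi
    · simp [ha i hi.symm, ← hi]
    · filter_upwards [Filter.eventually_ge_atTop (|a i| / s i)] with r hr
      exact (div_le_iff₀ hi).mp hr
  obtain ⟨r, hr, hr_pos⟩ :=
    ((Filter.eventually_all.mpr eventually_le).and (Filter.eventually_gt_atTop 0)).exists
  exact ⟨r⁻¹, inv_pos.mpr hr_pos, fun i ↦ (inv_mul_le_iff₀ hr_pos).mpr (hr i)⟩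

theorem eq_zero_of_mem_extremePoints_of_sub_mem_of_add_mem {𝕜 E : Type*} [Ring 𝕜] [LinearOrder 𝕜]
    [IsStrictOrderedRing 𝕜] [Invertible (2 : 𝕜)] [AddCommGroup E] [Module 𝕜 E] {S : Set E} {x d : E}
    (hx : x ∈ S.extremePoints 𝕜) (hsub : x - d ∈ S) (hadd : x + d ∈ S) : d = 0 :=
  sub_eq_self.mp (hx.2 hsub hadd (mem_openSegment_sub_add x d))

section Polyhedron

variable {𝕜 E W κ : Type*} [Field 𝕜] [LinearOrder 𝕜]
  [AddCommGroup E] [Module 𝕜 E] [AddCommGroup W] [Module 𝕜 W]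

/-- The polyhedron cut out by the equality constraints `A x = b` and the inequality constraints
`c i ≤ f i x`. The equalities are bundled into one linear map, the dimension of whose codomain
plays the role of their number. -/
def polyhedron (A : E →ₗ[𝕜] W) (b : W) (f : κ → Module.Dual 𝕜 E) (c : κ → 𝕜) : Set E :=
  {x | A x = b ∧ ∀ i, c i ≤ f i x}

variable [IsStrictOrderedRing 𝕜]
  {A : E →ₗ[𝕜] W} {b : W} {f : κ → Module.Dual 𝕜 E} {c : κ → 𝕜} {x d : E}

theorem add_mem_polyhedron (hx : x ∈ polyhedron A b f c) (hA : A d = 0)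
    (hf : ∀ i, |f i d| ≤ f i x - c i) : x + d ∈ polyhedron A b f c := by
  refine ⟨by rw [map_add, hx.1, hA, add_zero], fun i ↦ ?_⟩
  rw [map_add]
  linarith [neg_le_of_abs_le (hf i)]

theorem eq_zero_of_mem_extremePoints_polyhedron [Finite κ]
    (hx : x ∈ (polyhedron A b f c).extremePoints 𝕜) (hA : A d = 0)
    (htight : ∀ i, f i x = c i → f i d = 0) : d = 0 := by
  obtain ⟨ε, hε, hle⟩ := exists_pos_forall_mul_abs_le
    (fun i ↦ sub_nonneg.mpr (hx.1.2 i)) (fun i hi ↦ htight i (sub_eq_zero.mp hi))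
  have hslack (i : κ) : |f i (ε • d)| ≤ f i x - c i := by
    simpa only [map_smul, smul_eq_mul, abs_mul, abs_of_pos hε] using hle i
  have hadd : x + ε • d ∈ polyhedron A b f c := add_mem_polyhedron hx.1 (by simp [hA]) hslack
  have hsub : x - ε • d ∈ polyhedron A b f c := by
    rw [sub_eq_add_neg]
    exact add_mem_polyhedron hx.1 (by simp [hA]) (by simpa only [map_neg, abs_neg] using hslack)
  have hzero : ε • d = 0 := eq_zero_of_mem_extremePoints_of_sub_mem_of_add_mem hx hsub hadd
  exact (smul_eq_zero.mp hzero).resolve_left hε.ne'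

theorem finrank_le_finrank_add_card_tight_of_mem_extremePoints [Fintype κ] [FiniteDimensional 𝕜 W]
    (hx : x ∈ (polyhedron A b f c).extremePoints 𝕜) :
    Module.finrank 𝕜 E ≤ Module.finrank 𝕜 W + #{i | f i x = c i} := by
  let tightMap : E →ₗ[𝕜] W × ({i // f i x = c i} → 𝕜) :=
    A.prod (LinearMap.pi fun i ↦ f i)
  have hinj : Function.Injective tightMap := by
    rw [injective_iff_map_eq_zero]
    intro d hd
    obtain ⟨hA, hf⟩ := Prod.mk.inj hd
    exact eq_zero_of_mem_extremePoints_polyhedron hx hA fun i hi ↦ congrFun hf ⟨i, hi⟩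
  simpa only [Module.finrank_prod, Module.finrank_fintype_fun_eq_card, Fintype.card_subtype]
    using LinearMap.finrank_le_finrank_of_injective hinj

theorem card_ne_zero_le_finrank_add_card_tight [Fintype κ] [FiniteDimensional 𝕜 W]
    {ι : Type*} [Fintype ι] {A : (ι → 𝕜) →ₗ[𝕜] W}
    {g : κ → Module.Dual 𝕜 (ι → 𝕜)} {x : ι → 𝕜}
    (hx : x ∈ (polyhedron A b (Sum.elim LinearMap.proj g) (Sum.elim 0 c)).extremePoints 𝕜) :
    #{j | x j ≠ 0} ≤ Module.finrank 𝕜 W + #{i | g i x = c i} := by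
  have hcard := finrank_le_finrank_add_card_tight_of_mem_extremePoints hx
  have htight : #{i | (Sum.elim LinearMap.proj g i : Module.Dual 𝕜 (ι → 𝕜)) x =
      Sum.elim (0 : ι → 𝕜) c i} = #{j | x j = 0} + #{i | g i x = c i} := by
    simp only [card_filter, Fintype.sum_sum_type]
    rfl
  have hsplit : #{j | x j = 0} + #{j | x j ≠ 0} = Fintype.card ι :=
    card_filter_add_card_filter_not _
  rw [Module.finrank_fintype_fun_eq_card, htight] at hcard
  lia

end Polyhedron

theorem extreme_point_inactive_rate_at_most_two_constellations_general
    {𝕜 ι : Type*} [Field 𝕜] [LinearOrder 𝕜] [IsStrictOrderedRing 𝕜] [Fintype ι]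
    {P R η : ι → 𝕜} {Pave Rmin : 𝕜}
    (hη : η ∈ Set.extremePoints 𝕜 {η : ι → 𝕜 |
      (∀ j, 0 ≤ η j) ∧ ∑ j, η j = 1 ∧ ∑ j, η j * P j = Pave ∧ ∑ j, η j * R j ≥ Rmin})
    (hrate : ∑ j, η j * R j > Rmin) :
    #{j | η j ≠ 0} ≤ 2 := by
  let normalizationAndPower : (ι → 𝕜) →ₗ[𝕜] 𝕜 × 𝕜 :=
    (Fintype.linearCombination 𝕜 1).prod (Fintype.linearCombination 𝕜 P)
  let rate : Unit → Module.Dual 𝕜 (ι → 𝕜) := fun _ ↦ Fintype.linearCombination 𝕜 R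
  have hη' : η ∈ (polyhedron normalizationAndPower (1, Pave) (Sum.elim LinearMap.proj rate)
      (Sum.elim 0 fun _ ↦ Rmin)).extremePoints 𝕜 := by
    convert hη using 2
    ext x
    simp [polyhedron, normalizationAndPower, rate, Fintype.linearCombination_apply, and_assoc,
      and_left_comm]
  have hslack : #{i | rate i η = Rmin} = 0 := by
    simp [rate, Fintype.linearCombination_apply, hrate.ne']
  have hcard := card_ne_zero_le_finrank_add_card_tight hη'
  rwa [hslack, Module.finrank_prod, Module.finrank_self] at hcard

/-- refinement of Theorem 3: every extreme point of the feasible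
polytope at which the rate constraint is inactive has at most two nonzero
coordinates. -/
theorem extreme_point_inactive_rate_at_most_two_constellations
    (J : ℕ) (hJ : 1 ≤ J) (P R : Fin J → ℝ) (Pave Rmin : ℝ)
    (F : Set (Fin J → ℝ))
    (hF : F = {η : Fin J → ℝ |
      (∀ j, 0 ≤ η j) ∧ (∑ j : Fin J, η j = 1) ∧
      (∑ j : Fin J, η j * P j = Pave) ∧ (∑ j : Fin J, η j * R j ≥ Rmin)})
    (η : Fin J → ℝ) (hη : η ∈ Set.extremePoints ℝ F)
    (hrate : ∑ j : Fin J, η j * R j > Rmin) :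
    (Finset.univ.filter (fun j => η j ≠ 0)).card ≤ 2 := by
  subst hF
  exact extreme_point_inactive_rate_at_most_two_constellations_general hη hrate
end
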